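/- For n ≥ 4, the spectral parameter λ of the bipartite containment graph B_{n,2} satisfies λ² ≤ 75 · 2^{Q(n−3)}, where Q(i) = 2(n−i−2) + i(n−i) + i(i−1)/2. -/

import Mathlib

open Finset

abbrev F2 := ZMod 2
/-- `F2^{2n}`, split into the first and last `n` coordinates. -/
abbrev PV (n : ℕ) := (Fin n → F2) × (Fin n → F2)

/-- Symplectic product on `F2^{2n}`: zero iff `a₁·b₂ = a₂·b₁`. -/
def symp {n : ℕ} (a b : PV n) : F2 :=
  (∑ i, a.1 i * b.2 i) + (∑ i, a.2 i * b.1 i)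

/-- A subspace is isotropic if the symplectic product vanishes on it. -/
def IsIsotropic {n : ℕ} (S : Submodule F2 (PV n)) : Prop :=
  ∀ x ∈ S, ∀ y ∈ S, symp x y = 0

/-- `Lset n k` = `L^n_k`, the set of `k`-dimensional isotropic subspaces of `F2^{2n}`. -/
def Lset (n k : ℕ) : Set (Submodule F2 (PV n)) :=
  {S | IsIsotropic S ∧ Module.finrank F2 S = k}

/-- Integer lift of a vector over `F2`, with values in `{0,1} ⊆ ℤ`. -/
def liftZ {n : ℕ} (v : Fin n → F2) : Fin n → ℤ := fun i => ((v i).val : ℤ)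

def dotZ {n : ℕ} (a b : Fin n → ℤ) : ℤ := ∑ i, a i * b i

/-- The phase `i^{x̂₁·x̂₂} · i^{ŷ₁·ŷ₂} · i^{−((x+y)^^₁·(x+y)^^₂)} · (−1)^{x̂₂·ŷ₁}`. -/
noncomputable def phase {n : ℕ} (x y : PV n) : ℂ :=
  Complex.I ^ (dotZ (liftZ x.1) (liftZ x.2)) *
  Complex.I ^ (dotZ (liftZ y.1) (liftZ y.2)) *
  Complex.I ^ (-(dotZ (liftZ (x + y).1) (liftZ (x + y).2))) *
  (-1 : ℂ) ^ (dotZ (liftZ x.2) (liftZ y.1))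

/-- `w(x,y) ∈ {0,1} ⊆ F2`: zero iff the phase equals `1`. -/
noncomputable def wght {n : ℕ} (x y : PV n) : F2 :=
  if phase x y = 1 then 0 else 1

/-- An outcome of an isotropic subspace `S` is `f : S → F2` with
`f(x+y) = f(x)+f(y)+w(x,y)`. -/
def IsOutcome {n : ℕ} (S : Submodule F2 (PV n)) (f : S → F2) : Prop :=
  ∀ x y : S, f (x + y) = f x + f y + wght (x : PV n) (y : PV n)

/-- Two outcomes are consistent if they agree on the intersection of their domains. -/
def ConsistentOn {n : ℕ} {S₁ S₂ : Submodule F2 (PV n)} (f₁ : S₁ → F2) (f₂ : S₂ → F2) : Prop :=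
  ∀ v (h1 : v ∈ S₁) (h2 : v ∈ S₂), f₁ ⟨v, h1⟩ = f₂ ⟨v, h2⟩

open scoped Classical

noncomputable instance {n : ℕ} : Fintype (Submodule F2 (PV n)) := by
  have : Finite (Submodule F2 (PV n)) :=
    Finite.of_injective (fun S => (S : Set (PV n))) SetLike.coe_injective
  exact Fintype.ofFinite _

/-- Adjacency matrix (over `ℝ`) of the graph with adjacency relation `Adj`. -/
noncomputable def adjMat {V : Type*} [Fintype V] (Adj : V → V → Prop) : Matrix V V ℝ :=
  fun x y => if Adj x y then 1 else 0

/-- The set of eigenvalues of a matrix. -/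
def eigSet {V : Type*} [Fintype V] (A : Matrix V V ℝ) : Set ℝ :=
  {μ | ∃ v : V → ℝ, v ≠ 0 ∧ A.mulVec v = μ • v}

/-- The largest eigenvalue. -/
noncomputable def maxEig {V : Type*} [Fintype V] (A : Matrix V V ℝ) : ℝ :=
  sSup (eigSet A)

/-- The spectral parameter: the second largest element of `{|μ| : μ ∈ Spec(A)}`. -/
noncomputable def specParam {V : Type*} [Fintype V] (A : Matrix V V ℝ) : ℝ :=
  sSup ((abs '' eigSet A) \ {sSup (abs '' eigSet A)})

/-- Vertices of the bipartite graph `B_{n,2}`: `L^n_n ∪ L^n_2`. -/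
abbrev BVtx (n : ℕ) := {S : Submodule F2 (PV n) // S ∈ Lset n n ∪ Lset n 2}

/-- Adjacency in `B_{n,2}`: `x ∈ L^n_n` is adjacent to `t ∈ L^n_2` iff `t ⊊ x`. -/
def BAdj {n : ℕ} (x y : BVtx n) : Prop :=
  (x.1 ∈ Lset n 2 ∧ y.1 ∈ Lset n n ∧ x.1 < y.1) ∨
  (y.1 ∈ Lset n 2 ∧ x.1 ∈ Lset n n ∧ y.1 < x.1)

/-- The adjacency matrix of `B_{n,2}`. -/
noncomputable def adjB (n : ℕ) : Matrix (BVtx n) (BVtx n) ℝ := adjMat BAdj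

/-- The exponent `Q(i) = 2(n−i−2) + i(n−i) + i(i−1)/2`. -/
def Qexp (n i : ℕ) : ℕ := 2 * (n - i - 2) + i * (n - i) + i * (i - 1) / 2

section helpers
variable {n : ℕ}

lemma F2_add_self (x : F2) : x + x = 0 := CharTwo.add_self_eq_zero x

lemma PV_add_self (x : PV n) : x + x = 0 := by
  ext i <;> exact F2_add_self _

lemma symp_comm (a b : PV n) : symp a b = symp b a := by
  unfold symp
  rw [add_comm]
  simp only [mul_comm]

lemma symp_self (a : PV n) : symp a a = 0 := by
  unfold symp
  have : (∑ i, a.2 i * a.1 i) = ∑ i, a.1 i * a.2 i := by simp only [mul_comm]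
  rw [this]; exact F2_add_self _

lemma symp_add_left (a b c : PV n) : symp (a + b) c = symp a c + symp b c := by
  simp only [symp, Prod.fst_add, Prod.snd_add, Pi.add_apply, add_mul, Finset.sum_add_distrib]
  ring

lemma symp_add_right (a b c : PV n) : symp c (a + b) = symp c a + symp c b := by
  rw [symp_comm, symp_add_left, symp_comm a, symp_comm b]

lemma symp_smul_left (r : F2) (a c : PV n) : symp (r • a) c = r * symp a c := by
  simp only [symp, Prod.smul_fst, Prod.smul_snd, Pi.smul_apply, smul_eq_mul, mul_add,
    Finset.mul_sum, mul_assoc]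

lemma symp_smul_right (r : F2) (a c : PV n) : symp c (r • a) = r * symp c a := by
  rw [symp_comm, symp_smul_left, symp_comm]

lemma symp_zero_left (a : PV n) : symp 0 a = 0 := by
  simp [symp]

lemma symp_nondeg (a : PV n) (h : a ≠ 0) : ∃ w, symp w a = 1 := by
  have key : ∀ x : F2, x ≠ 0 → x = 1 := by decide
  by_cases h1 : a.1 = 0
  · have h2 : a.2 ≠ 0 := fun h2 => h (Prod.ext h1 h2)
    obtain ⟨i, hi⟩ := Function.ne_iff.mp h2
    refine ⟨(Pi.single i 1, 0), ?_⟩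
    simp [symp, Pi.single_apply]
    exact key _ hi
  · obtain ⟨i, hi⟩ := Function.ne_iff.mp h1
    refine ⟨(0, Pi.single i 1), ?_⟩
    simp [symp, Pi.single_apply]
    exact key _ hi

/-- The symplectic form as a bilinear form. -/
noncomputable def sympB (n : ℕ) : LinearMap.BilinForm F2 (PV n) :=
  LinearMap.mk₂ F2 symp symp_add_left symp_smul_left (fun c a b => symp_add_right a b c)
    (fun r c a => symp_smul_right r a c)

lemma sympB_apply (a b : PV n) : sympB n a b = symp a b := rfl

lemma sympB_nondeg : (sympB n).Nondegenerate := by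
  constructor
  · intro x hx
    by_contra h
    obtain ⟨w, hw⟩ := symp_nondeg x h
    have := hx w
    rw [sympB_apply, symp_comm, hw] at this
    exact one_ne_zero this
  · intro x hx
    by_contra h
    obtain ⟨w, hw⟩ := symp_nondeg x h
    have := hx w
    rw [sympB_apply, hw] at this
    exact one_ne_zero this

lemma finrank_PV : Module.finrank F2 (PV n) = 2 * n := by
  simp [two_mul]

/-- The orthogonal complement. -/
noncomputable def perp (S : Submodule F2 (PV n)) : Submodule F2 (PV n) := (sympB n).orthogonal S

lemma mem_perp {S : Submodule F2 (PV n)} {v : PV n} : v ∈ perp S ↔ ∀ x ∈ S, symp x v = 0 :=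
  Iff.rfl

lemma finrank_perp (S : Submodule F2 (PV n)) :
    Module.finrank F2 (perp S) = 2 * n - Module.finrank F2 S := by
  have := LinearMap.BilinForm.finrank_orthogonal (sympB_nondeg (n := n)) S
  rw [finrank_PV] at this
  exact this

lemma card_sub (S : Submodule F2 (PV n)) :
    (univ.filter (fun v => v ∈ S)).card = 2 ^ Module.finrank F2 S := by
  have h := Module.card_eq_pow_finrank (K := F2) (V := S)
  rw [ZMod.card] at h
  rw [← h, Fintype.card_subtype]

/-- Adjoining a vector. -/
def ad (S : Submodule F2 (PV n)) (v : PV n) : Submodule F2 (PV n) := S ⊔ Submodule.span F2 {v}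

lemma mem_ad {S : Submodule F2 (PV n)} {v x : PV n} : x ∈ ad S v ↔ x ∈ S ∨ x + v ∈ S := by
  unfold ad
  rw [Submodule.mem_sup]
  constructor
  · rintro ⟨y, hy, z, hz, rfl⟩
    obtain ⟨r, rfl⟩ := Submodule.mem_span_singleton.mp hz
    have : ∀ r : F2, r = 0 ∨ r = 1 := by decide
    rcases this r with rfl | rfl
    · left; simpa using hy
    · right
      rw [one_smul, add_assoc, PV_add_self, add_zero]; exact hy
  · rintro (h | h)
    · exact ⟨x, h, 0, Submodule.zero_mem _, add_zero _⟩
    · refine ⟨x + v, h, v, Submodule.mem_span_singleton_self v, ?_⟩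
      rw [add_assoc, PV_add_self, add_zero]

lemma le_ad (S : Submodule F2 (PV n)) (v : PV n) : S ≤ ad S v := le_sup_left
lemma self_mem_ad (S : Submodule F2 (PV n)) (v : PV n) : v ∈ ad S v :=
  mem_ad.mpr (Or.inr (by rw [PV_add_self]; exact S.zero_mem))

lemma ad_le {S x : Submodule F2 (PV n)} {v : PV n} : ad S v ≤ x ↔ S ≤ x ∧ v ∈ x := by
  unfold ad
  rw [sup_le_iff, Submodule.span_singleton_le_iff_mem]

lemma finrank_ad {S : Submodule F2 (PV n)} {v : PV n} (h : v ∉ S) :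
    Module.finrank F2 (ad S v) = Module.finrank F2 S + 1 := by
  have hv : v ≠ 0 := fun h0 => h (h0 ▸ S.zero_mem)
  have h1 := Submodule.finrank_sup_add_finrank_inf_eq S (Submodule.span F2 {v})
  have h2 : S ⊓ Submodule.span F2 {v} = ⊥ :=
    ((Submodule.disjoint_span_singleton' hv).mpr h).eq_bot
  rw [h2, finrank_bot, finrank_span_singleton hv] at h1
  exact h1

lemma ad_of_mem {S : Submodule F2 (PV n)} {v : PV n} (h : v ∈ S) : ad S v = S :=
  le_antisymm (ad_le.mpr ⟨le_rfl, h⟩) (le_ad S v)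

lemma finrank_ad_le (S : Submodule F2 (PV n)) (v : PV n) :
    Module.finrank F2 (ad S v) ≤ Module.finrank F2 S + 1 := by
  by_cases h : v ∈ S
  · rw [ad_of_mem h]; omega
  · rw [finrank_ad h]

lemma iso_ad {S : Submodule F2 (PV n)} {v : PV n} (hS : IsIsotropic S) (hv : v ∈ perp S) :
    IsIsotropic (ad S v) := by
  have hx : ∀ x ∈ ad S v, x ∈ S ∨ ∃ y ∈ S, x = y + v := by
    intro x hx
    rcases mem_ad.mp hx with h | h
    · exact Or.inl h
    · exact Or.inr ⟨_, h, by rw [add_assoc, PV_add_self, add_zero]⟩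
  have hv' := mem_perp.mp hv
  intro x h y h'
  rcases hx x h with h | ⟨a, ha, rfl⟩ <;> rcases hx y h' with h' | ⟨b, hb, rfl⟩
  · exact hS _ h _ h'
  · rw [symp_add_right, hS _ h _ hb, hv' _ h, add_zero]
  · rw [symp_add_left, hS _ ha _ h', symp_comm, hv' _ h', add_zero]
  · rw [symp_add_left, symp_add_right, symp_add_right, hS _ ha _ hb, hv' _ ha, symp_comm v b,
      hv' _ hb, symp_self]; simp

lemma iso_le {S x : Submodule F2 (PV n)} (hx : IsIsotropic x) (h : S ≤ x) : IsIsotropic S :=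
  fun a ha b hb => hx a (h ha) b (h hb)

/-- The number of Lagrangians containing `S`. -/
noncomputable def NL (S : Submodule F2 (PV n)) : ℕ :=
  (univ.filter (fun x => x ∈ Lset n n ∧ S ≤ x)).card

/-- `∏_{i=1}^m (2^i+1)`. -/
def Pc (m : ℕ) : ℕ := ∏ i ∈ range m, (2 ^ (i + 1) + 1)

lemma Pc_succ (m : ℕ) : Pc (m + 1) = Pc m * (2 ^ (m + 1) + 1) := by
  unfold Pc; rw [prod_range_succ]

lemma card_diff (S x : Submodule F2 (PV n)) (h : S ≤ x) :
    (univ.filter (fun v => v ∈ x ∧ v ∉ S)).card + 2 ^ Module.finrank F2 S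
      = 2 ^ Module.finrank F2 x := by
  rw [← card_sub, ← card_sub, ← Finset.card_union_of_disjoint]
  · congr 1
    ext v
    simp only [mem_union, mem_filter, mem_univ, true_and]
    constructor
    · rintro (h' | h')
      · exact h'.1
      · exact h h'
    · intro h'
      by_cases hv : v ∈ S
      · exact Or.inr hv
      · exact Or.inl ⟨h', hv⟩
  · rw [Finset.disjoint_left]
    intro v hv hv'
    simp only [mem_filter, mem_univ, true_and] at hv hv'
    exact hv.2 hv'

lemma NL_eq (m : ℕ) : ∀ S : Submodule F2 (PV n), IsIsotropic S →
    Module.finrank F2 S + m = n → NL S = Pc m := by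
  induction m with
  | zero =>
    intro S hS hk
    have : univ.filter (fun x => x ∈ Lset n n ∧ S ≤ x) = {S} := by
      ext x
      simp only [mem_filter, mem_univ, true_and, mem_singleton]
      constructor
      · rintro ⟨hx, hle⟩
        exact (Submodule.eq_of_le_of_finrank_eq hle (by rw [hx.2]; omega)).symm
      · rintro rfl
        exact ⟨⟨hS, by omega⟩, le_rfl⟩
    rw [NL, this]; simp [Pc]
  | succ m ih =>
    intro S hS hk
    set k := Module.finrank F2 S with hkdef
    have hSp : S ≤ perp S := fun v hv x hx => hS x hx v hv
    -- double count pairs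
    have hdc : ∑ x ∈ univ.filter (fun x => x ∈ Lset n n ∧ S ≤ x),
        (univ.filter (fun v => v ∈ x ∧ v ∉ S)).card =
        ∑ v ∈ univ.filter (fun v => v ∈ perp S ∧ v ∉ S), NL (ad S v) := by
      simp only [NL, Finset.card_eq_sum_ones, Finset.sum_filter]
      rw [← Finset.sum_filter]
      rw [Finset.sum_filter]
      have e1 : ∀ x : Submodule F2 (PV n), (if x ∈ Lset n n ∧ S ≤ x then
          ∑ a, (if a ∈ x ∧ a ∉ S then 1 else 0) else 0) =
          ∑ a, if (x ∈ Lset n n ∧ S ≤ x) ∧ (a ∈ x ∧ a ∉ S) then 1 else 0 := by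
        intro x
        by_cases h : x ∈ Lset n n ∧ S ≤ x <;> simp [h]
      have e2 : ∀ v : PV n, (if v ∈ perp S ∧ v ∉ S then
          ∑ x : Submodule F2 (PV n), (if x ∈ Lset n n ∧ ad S v ≤ x then 1 else 0) else 0) =
          ∑ x : Submodule F2 (PV n), if (x ∈ Lset n n ∧ S ≤ x) ∧ (v ∈ x ∧ v ∉ S) then 1 else 0 := by
        intro v
        by_cases h : v ∈ perp S ∧ v ∉ S
        · rw [if_pos h]
          apply Finset.sum_congr rfl
          intro x _
          congr 1
          rw [ad_le]
          simp only [h.2, not_false_eq_true, and_true, and_assoc]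
        · rw [if_neg h]
          symm
          apply Finset.sum_eq_zero
          intro x _
          rw [if_neg]
          rintro ⟨⟨h1, h2⟩, h3, h4⟩
          exact h ⟨fun y hy => h1.1 y (h2 hy) v h3, h4⟩
      simp only [e1, e2]
      rw [Finset.sum_comm]
    have hL : ∑ x ∈ univ.filter (fun x => x ∈ Lset n n ∧ S ≤ x),
        (univ.filter (fun v => v ∈ x ∧ v ∉ S)).card = NL S * (2 ^ n - 2 ^ k) := by
      rw [NL, ← smul_eq_mul, ← Finset.sum_const]
      apply Finset.sum_congr rfl
      intro x hx
      simp only [mem_filter, mem_univ, true_and] at hx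
      have := card_diff S x hx.2
      rw [hx.1.2, ← hkdef] at this
      omega
    have hR : ∑ v ∈ univ.filter (fun v => v ∈ perp S ∧ v ∉ S), NL (ad S v) =
        (2 ^ (2 * n - k) - 2 ^ k) * Pc m := by
      have := card_diff S (perp S) hSp
      rw [finrank_perp, ← hkdef] at this
      have h2 : (univ.filter (fun v => v ∈ perp S ∧ v ∉ S)).card = 2 ^ (2 * n - k) - 2 ^ k := by
        omega
      rw [← h2, ← smul_eq_mul, ← Finset.sum_const]
      apply Finset.sum_congr rfl
      intro v hv
      simp only [mem_filter, mem_univ, true_and] at hv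
      apply ih _ (iso_ad hS hv.1)
      rw [finrank_ad hv.2]; omega
    rw [hL, hR] at hdc
    have hn : n = k + (m + 1) := by omega
    have e3 : (2:ℕ) ^ n - 2 ^ k = 2 ^ k * (2 ^ (m + 1) - 1) := by
      rw [hn, pow_add, Nat.mul_sub, mul_one]
    have e4 : (2:ℕ) ^ (2 * n - k) - 2 ^ k = 2 ^ k * (2 ^ (m + 1) - 1) * (2 ^ (m + 1) + 1) := by
      have : 2 * n - k = k + (m + 1) + (m + 1) := by omega
      obtain ⟨q, hq⟩ : ∃ q, 2 ^ (m + 1) = q + 1 :=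
        ⟨2 ^ (m + 1) - 1, by have : 0 < 2 ^ (m + 1) := by positivity
                             omega⟩
      rw [this, pow_add, pow_add, hq, Nat.add_sub_cancel]
      apply Nat.sub_eq_of_eq_add
      ring
    rw [e3, e4] at hdc
    have hpos : 0 < 2 ^ k * (2 ^ (m + 1) - 1) := by
      have : 1 < 2 ^ (m + 1) := Nat.one_lt_two_pow (by omega)
      have : 0 < 2 ^ (m + 1) - 1 := by omega
      positivity
    rw [Pc_succ]
    apply Nat.eq_of_mul_eq_mul_right hpos
    rw [hdc]; ring

lemma iso_finrank_le {S : Submodule F2 (PV n)} (hS : IsIsotropic S) : Module.finrank F2 S ≤ n := by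
  have hSp : S ≤ perp S := fun v hv x hx => hS x hx v hv
  have := Submodule.finrank_mono hSp
  rw [finrank_perp] at this
  omega

lemma NL_iso {S : Submodule F2 (PV n)} (hS : IsIsotropic S) :
    NL S = Pc (n - Module.finrank F2 S) :=
  NL_eq _ S hS (by have := iso_finrank_le hS; omega)

lemma NL_not_iso {S : Submodule F2 (PV n)} (hS : ¬ IsIsotropic S) : NL S = 0 := by
  rw [NL, Finset.card_eq_zero, Finset.filter_eq_empty_iff]
  rintro x _ ⟨hx, hle⟩
  exact hS (iso_le hx.1 hle)

lemma NL_anti {S T : Submodule F2 (PV n)} (h : S ≤ T) : NL T ≤ NL S := by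
  apply Finset.card_le_card
  intro x
  simp only [mem_filter, mem_univ, true_and]
  exact fun hx => ⟨hx.1, h.trans hx.2⟩

lemma Pc_mono : Monotone Pc := by
  apply monotone_nat_of_le_succ
  intro m
  rw [Pc_succ]
  exact Nat.le_mul_of_pos_right _ (by positivity)
end helpers
section analytic
variable {n : ℕ}

/-- The sign character. -/
noncomputable def chi (x : F2) : ℝ := if x = 0 then 1 else -1

lemma chi_add (x y : F2) : chi (x + y) = chi x * chi y := by
  have key : ∀ r : F2, r = 0 ∨ r = 1 := by decide
  have h11 : (1 : F2) + 1 = 0 := by decide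
  rcases key x with rfl | rfl <;> rcases key y with rfl | rfl <;> simp [chi, h11]

/-- The Fourier kernel. -/
noncomputable def ee (a b : PV n) : ℝ := chi (symp a b)

lemma ee_add_right (a b c : PV n) : ee c (a + b) = ee c a * ee c b := by
  rw [ee, symp_add_right, chi_add]; rfl

lemma ee_add_left (a b c : PV n) : ee (a + b) c = ee a c * ee b c := by
  rw [ee, symp_add_left, chi_add]; rfl

lemma ee_sum (y : PV n) : ∑ x, ee x y = if y = 0 then ((2:ℝ) ^ n) ^ 2 else 0 := by
  split_ifs with h
  · subst h
    have h0 : ∀ x : PV n, ee x 0 = 1 := by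
      intro x; simp [ee, symp, chi]
    simp only [h0, Finset.sum_const, Finset.card_univ]
    simp only [Fintype.card_prod, Fintype.card_pi, ZMod.card, prod_const, card_univ,
      Fintype.card_fin, nsmul_eq_mul, Nat.cast_mul, Nat.cast_pow, Nat.cast_ofNat, mul_one]
    ring
  · obtain ⟨w, hw⟩ := symp_nondeg y h
    have h1 : ∑ x, ee x y = ∑ x, ee (x + w) y :=
      (Equiv.sum_comp (Equiv.addRight w) (fun x => ee x y)).symm
    have h2 : ∀ x, ee (x + w) y = - ee x y := by
      intro x
      rw [ee_add_left]
      have : ee w y = -1 := by rw [ee, hw]; simp [chi]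
      rw [this]; ring
    simp only [h2, Finset.sum_neg_distrib] at h1
    linarith

lemma PV_add_eq_zero (y z : PV n) : y + z = 0 ↔ y = z := by
  constructor
  · intro h
    have := congrArg (· + z) h
    simpa [add_assoc, PV_add_self] using this
  · rintro rfl; exact PV_add_self y

lemma ee_orth (y z : PV n) : ∑ x, ee x y * ee x z = if y = z then ((2:ℝ) ^ n) ^ 2 else 0 := by
  simp only [← ee_add_right, ee_sum, PV_add_eq_zero]

lemma op_bound {X : Type*} [Fintype X] [DecidableEq X] (k : X → X → ℝ) (N : ℝ) (hN : 0 < N)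
    (hk : ∀ y z, ∑ x, k x y * k x z = if y = z then N ^ 2 else 0) (h : X → ℝ) :
    ∑ x, ∑ y, h x * h y * k x y ≤ N * ∑ x, h x ^ 2 := by
  set u : X → ℝ := fun x => ∑ y, h y * k x y with hu
  have h1 : ∑ x, u x ^ 2 = N ^ 2 * ∑ x, h x ^ 2 := by
    have : ∀ x, u x ^ 2 = ∑ y, ∑ z, h y * h z * (k x y * k x z) := by
      intro x
      rw [sq, hu, Finset.sum_mul_sum]
      refine Finset.sum_congr rfl fun y _ => Finset.sum_congr rfl fun z _ => by ring
    simp only [this]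
    rw [Finset.sum_comm]
    have h3 : ∀ y, ∑ x, ∑ z, h y * h z * (k x y * k x z) = N ^ 2 * h y ^ 2 := by
      intro y
      rw [Finset.sum_comm]
      simp only [← Finset.mul_sum, hk]
      simp only [mul_ite, mul_zero, Finset.sum_ite_eq, mem_univ, if_true]
      ring
    simp only [h3, Finset.mul_sum]
  have h2 : ∑ x, ∑ y, h x * h y * k x y = ∑ x, h x * u x := by
    refine Finset.sum_congr rfl fun x _ => ?_
    rw [hu, Finset.mul_sum]
    exact Finset.sum_congr rfl fun y _ => by ring
  rw [h2]
  have h4 : N * ∑ x, h x * u x ≤ N * (N * ∑ x, h x ^ 2) := by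
    have : ∀ x, N * (h x * u x) ≤ (N ^ 2 * h x ^ 2 + u x ^ 2) / 2 := by
      intro x
      nlinarith [sq_nonneg (N * h x - u x)]
    calc N * ∑ x, h x * u x = ∑ x, N * (h x * u x) := Finset.mul_sum _ _ _
      _ ≤ ∑ x, (N ^ 2 * h x ^ 2 + u x ^ 2) / 2 := Finset.sum_le_sum fun x _ => this x
      _ = N * (N * ∑ x, h x ^ 2) := by
        rw [← Finset.sum_div, Finset.sum_add_distrib, h1, ← Finset.mul_sum]; ring
  exact le_of_mul_le_mul_left h4 hN

lemma schur_bound {X : Type*} [Fintype X] (k : X → X → ℝ) (R : ℝ) (h0 : ∀ x y, 0 ≤ k x y)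
    (hs : ∀ x y, k x y = k y x) (hR : ∀ x, ∑ y, k x y ≤ R) (h : X → ℝ) :
    ∑ x, ∑ y, h x * h y * k x y ≤ R * ∑ x, h x ^ 2 := by
  have h1 : ∑ x, ∑ y, h x * h y * k x y ≤ ∑ x, ∑ y, (h x ^ 2 * k x y + h y ^ 2 * k x y) / 2 := by
    refine Finset.sum_le_sum fun x _ => Finset.sum_le_sum fun y _ => ?_
    nlinarith [mul_nonneg (sq_nonneg (h x - h y)) (h0 x y)]
  have h2 : ∑ x, ∑ y, h y ^ 2 * k x y = ∑ x, ∑ y, h x ^ 2 * k x y := by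
    rw [Finset.sum_comm]
    exact Finset.sum_congr rfl fun x _ => Finset.sum_congr rfl fun y _ => by rw [hs]
  have h3 : ∑ x, ∑ y, h x ^ 2 * k x y ≤ R * ∑ x, h x ^ 2 := by
    rw [Finset.mul_sum]
    refine Finset.sum_le_sum fun x _ => ?_
    rw [← Finset.mul_sum, mul_comm]
    exact mul_le_mul_of_nonneg_right (hR x) (sq_nonneg _)
  have h4 : ∑ x, ∑ y, (h x ^ 2 * k x y + h y ^ 2 * k x y) / 2 = ∑ x, ∑ y, h x ^ 2 * k x y := by
    simp only [← Finset.sum_div, Finset.sum_add_distrib]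
    rw [h2]; ring
  linarith

/-- swap -/
def sw (x : PV n × PV n) : PV n × PV n := (x.2, x.1)
/-- shear -/
def sh (x : PV n × PV n) : PV n × PV n := (x.1, x.1 + x.2)

lemma sw_sw : Function.Involutive (sw (n := n)) := fun _ => rfl
lemma sh_sh : Function.Involutive (sh (n := n)) := by
  intro x
  simp only [sh]
  rw [← add_assoc, PV_add_self, zero_add]

lemma sum_sw (G : PV n × PV n → ℝ) (hG : ∀ x, G (sw x) = G x) (F : PV n × PV n → ℝ) :
    ∑ x, G x * F (sw x) = ∑ x, G x * F x := by
  rw [← Equiv.sum_comp (sw_sw (n := n)).toPerm (fun x => G x * F x)]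
  refine Finset.sum_congr rfl fun x _ => ?_
  rw [Function.Involutive.coe_toPerm, hG]

lemma sum_sh (G : PV n × PV n → ℝ) (hG : ∀ x, G (sh x) = G x) (F : PV n × PV n → ℝ) :
    ∑ x, G x * F (sh x) = ∑ x, G x * F x := by
  rw [← Equiv.sum_comp (sh_sh (n := n)).toPerm (fun x => G x * F x)]
  refine Finset.sum_congr rfl fun x _ => ?_
  rw [Function.Involutive.coe_toPerm, hG]

/-- orthogonality of pairs -/
def PO (x y : PV n × PV n) : Prop :=
  symp x.1 y.1 = 0 ∧ symp x.1 y.2 = 0 ∧ symp x.2 y.1 = 0 ∧ symp x.2 y.2 = 0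

/-- rank-one part -/
noncomputable def r1 (a : PV n) (y : PV n × PV n) : ℝ := ee a y.1 + ee a y.2 + ee a (y.1 + y.2)

/-- rank-two kernel -/
noncomputable def kk (x y : PV n × PV n) : ℝ := ee x.1 y.1 * ee x.2 y.2

lemma PO_expand (x y : PV n × PV n) : (if PO x y then (1:ℝ) else 0) =
    (1 + (r1 x.1 y + r1 x.2 y + r1 (x.1 + x.2) y) +
      (kk x y + kk x (sw y) + kk x (sh y) + kk x (sw (sh y)) + kk x (sh (sw y))
        + kk x (sw (sh (sw y))))) / 16 := by
  have key : ∀ r : F2, r = 0 ∨ r = 1 := by decide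
  simp only [r1, kk, sw, sh, ee_add_left, ee_add_right, PO]
  simp only [ee]
  rcases key (symp x.1 y.1) with hp | hp <;> rcases key (symp x.1 y.2) with hq | hq <;>
  rcases key (symp x.2 y.1) with hr | hr <;> rcases key (symp x.2 y.2) with hs | hs <;>
    simp [chi, hp, hq, hr, hs] <;> norm_num

lemma PO_bound (G : PV n × PV n → ℝ) (hsw : ∀ x, G (sw x) = G x) (hsh : ∀ x, G (sh x) = G x)
    (h0 : ∑ x, G x = 0) :
    ∑ x, ∑ y, G x * G y * (if PO x y then (1:ℝ) else 0) ≤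
      (9 * ((2:ℝ) ^ n) ^ 3 + 6 * ((2:ℝ) ^ n) ^ 2) / 16 * ∑ x, G x ^ 2 := by
  -- one-variable reductions
  have redA : ∀ f : PV n → ℝ, ∑ y, G y * f y.2 = ∑ y, G y * f y.1 := fun f =>
    sum_sw G hsw (fun y => f y.1)
  have redB : ∀ f : PV n → ℝ, ∑ y, G y * f (y.1 + y.2) = ∑ y, G y * f y.1 := fun f =>
    (sum_sh G hsh (fun y => f y.2)).trans (redA f)
  have hr1 : ∀ a, ∑ y, G y * r1 a y = 3 * ∑ y, G y * ee a y.1 := by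
    intro a
    simp only [r1, mul_add, Finset.sum_add_distrib]
    rw [redA (fun v => ee a v)]
    have := redB (fun v => ee a v)
    rw [this]; ring
  have hkk : ∀ x, ∑ y, G y * (kk x y + kk x (sw y) + kk x (sh y) + kk x (sw (sh y))
      + kk x (sh (sw y)) + kk x (sw (sh (sw y)))) = 6 * ∑ y, G y * kk x y := by
    intro x
    simp only [mul_add, Finset.sum_add_distrib]
    have a1 := sum_sw G hsw (fun y => kk x y)
    have a2 := sum_sh G hsh (fun y => kk x y)
    have a3 := sum_sh G hsh (fun y => kk x (sw y))
    have a4 := sum_sw G hsw (fun y => kk x (sh y))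
    have a5 := sum_sw G hsw (fun y => kk x (sw (sh y)))
    linarith
  set S1 := ∑ x, ∑ y, G x * G y * ee x.1 y.1 with hS1
  set S2 := ∑ x, ∑ y, G x * G y * kk x y with hS2
  have hmain : ∑ x, ∑ y, G x * G y * (if PO x y then (1:ℝ) else 0) = (9 * S1 + 6 * S2) / 16 := by
    have e1 : ∀ x, ∑ y, G x * G y * (if PO x y then (1:ℝ) else 0) =
        G x * ((3 * ∑ y, G y * ee x.1 y.1) + (3 * ∑ y, G y * ee x.2 y.1)
          + (3 * ∑ y, G y * ee (x.1 + x.2) y.1) + 6 * ∑ y, G y * kk x y) / 16 := by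
      intro x
      rw [← hr1, ← hr1, ← hr1, ← hkk]
      have : ∀ y, G x * G y * (if PO x y then (1:ℝ) else 0) = G x * (G y + (G y * r1 x.1 y
          + G y * r1 x.2 y + G y * r1 (x.1 + x.2) y + G y * (kk x y + kk x (sw y) + kk x (sh y)
          + kk x (sw (sh y)) + kk x (sh (sw y)) + kk x (sw (sh (sw y)))))) / 16 := by
        intro y
        rw [PO_expand]; ring
      simp only [this]
      rw [← Finset.sum_div, ← Finset.mul_sum, Finset.sum_add_distrib, h0, zero_add]
      simp only [Finset.sum_add_distrib]
    simp only [e1]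
    rw [← Finset.sum_div]
    congr 1
    simp only [mul_add, Finset.sum_add_distrib]
    have b1 := redA (fun v => 3 * ∑ y, G y * ee v y.1)
    have b2 := redB (fun v => 3 * ∑ y, G y * ee v y.1)
    rw [b1, b2]
    have c1 : ∑ x, G x * (3 * ∑ y, G y * ee x.1 y.1) = 3 * S1 := by
      rw [hS1, Finset.mul_sum]
      refine Finset.sum_congr rfl fun x _ => ?_
      simp only [mul_assoc, ← Finset.mul_sum]; ring
    have c2 : ∑ x, G x * (6 * ∑ y, G y * kk x y) = 6 * S2 := by
      rw [hS2, Finset.mul_sum]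
      refine Finset.sum_congr rfl fun x _ => ?_
      simp only [mul_assoc, ← Finset.mul_sum]; ring
    rw [c1, c2]; ring
  have hNpos : (0:ℝ) < 2 ^ n := by positivity
  have hS2b : S2 ≤ ((2:ℝ) ^ n) ^ 2 * ∑ x, G x ^ 2 := by
    apply op_bound kk _ (by positivity)
    intro y z
    rw [Fintype.sum_prod_type]
    have : ∀ a b : PV n, kk (a, b) y * kk (a, b) z = (ee a y.1 * ee a z.1) * (ee b y.2 * ee b z.2) := by
      intro a b; simp only [kk]; ring
    simp only [this, ← Finset.mul_sum, ← Finset.sum_mul, ee_orth]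
    by_cases h1 : y.1 = z.1 <;> by_cases h2 : y.2 = z.2 <;> simp [h1, h2, Prod.ext_iff]
    ring
  have hS1b : S1 ≤ ((2:ℝ) ^ n) ^ 3 * ∑ x, G x ^ 2 := by
    set h : PV n → ℝ := fun a => ∑ b, G (a, b) with hh
    have e1 : S1 = ∑ a, ∑ c, h a * h c * ee a c := by
      rw [hS1, Fintype.sum_prod_type]
      refine Finset.sum_congr rfl fun a _ => ?_
      have e0 : ∀ b, ∑ y : PV n × PV n, G (a, b) * G y * ee (a, b).1 y.1 =
          ∑ c, ∑ d, G (a, b) * G (c, d) * ee a c := fun b => Fintype.sum_prod_type _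
      simp only [e0]
      rw [Finset.sum_comm]
      refine Finset.sum_congr rfl fun c _ => ?_
      simp only [hh]
      rw [Finset.sum_mul_sum, Finset.sum_mul]
      refine Finset.sum_congr rfl fun b _ => ?_
      rw [Finset.sum_mul]
    have e2 := op_bound (fun a c : PV n => ee a c) ((2:ℝ) ^ n) hNpos ee_orth h
    have e3 : ∑ a, h a ^ 2 ≤ ((2:ℝ) ^ n) ^ 2 * ∑ x, G x ^ 2 := by
      have e4 : ∑ x : PV n × PV n, G x ^ 2 = ∑ a, ∑ b, G (a, b) ^ 2 := Fintype.sum_prod_type _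
      rw [e4, Finset.mul_sum]
      refine Finset.sum_le_sum fun a _ => ?_
      have := sq_sum_le_card_mul_sum_sq (s := (univ : Finset (PV n))) (f := fun b => G (a, b))
      have hc : ((univ : Finset (PV n)).card : ℝ) = ((2:ℝ) ^ n) ^ 2 := by
        simp only [Finset.card_univ, Fintype.card_prod, Fintype.card_pi, ZMod.card, prod_const,
          Fintype.card_fin, Nat.cast_mul, Nat.cast_pow, Nat.cast_ofNat]
        ring
      rw [hc] at this
      exact this
    rw [e1]
    calc _ ≤ _ := e2
      _ ≤ (2:ℝ) ^ n * (((2:ℝ) ^ n) ^ 2 * ∑ x, G x ^ 2) := by gcongr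
      _ = _ := by ring
  rw [hmain]
  linarith
end analytic
section kernel
variable {n : ℕ}

/-- Ordered bases of isotropic planes. -/
def Om (x : PV n × PV n) : Prop := x.1 ≠ 0 ∧ x.2 ≠ 0 ∧ x.1 ≠ x.2 ∧ symp x.1 x.2 = 0

/-- The plane spanned by a pair. -/
def sp (x : PV n × PV n) : Submodule F2 (PV n) := ad (ad ⊥ x.1) x.2

lemma sp_le {x : PV n × PV n} {S : Submodule F2 (PV n)} : sp x ≤ S ↔ x.1 ∈ S ∧ x.2 ∈ S := by
  simp [sp, ad_le]

lemma fst_mem_sp (x : PV n × PV n) : x.1 ∈ sp x := (sp_le.mp le_rfl).1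
lemma snd_mem_sp (x : PV n × PV n) : x.2 ∈ sp x := (sp_le.mp le_rfl).2

lemma sp_sw (x : PV n × PV n) : sp (sw x) = sp x := by
  apply le_antisymm
  · exact sp_le.mpr ⟨snd_mem_sp x, fst_mem_sp x⟩
  · exact sp_le.mpr ⟨snd_mem_sp (sw x), fst_mem_sp (sw x)⟩

lemma sp_sh (x : PV n × PV n) : sp (sh x) = sp x := by
  have h : ∀ x : PV n × PV n, sp (sh x) ≤ sp x := fun x =>
    sp_le.mpr ⟨fst_mem_sp x, Submodule.add_mem _ (fst_mem_sp x) (snd_mem_sp x)⟩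
  apply le_antisymm (h x)
  have := h (sh x)
  rwa [sh_sh x] at this

lemma Om_sw (x : PV n × PV n) : Om (sw x) ↔ Om x := by
  simp only [Om, sw]
  rw [symp_comm x.2 x.1]
  tauto

lemma Om_sh (x : PV n × PV n) : Om (sh x) ↔ Om x := by
  simp only [Om, sh]
  rw [symp_add_right, symp_self, zero_add]
  have h1 : x.1 + x.2 ≠ 0 ↔ x.1 ≠ x.2 := not_congr (PV_add_eq_zero _ _)
  have h2 : x.1 ≠ x.1 + x.2 ↔ x.2 ≠ 0 := by
    rw [ne_eq, left_eq_add]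
  rw [h1, h2]; tauto

lemma finrank_sp {x : PV n × PV n} (h : Om x) : Module.finrank F2 (sp x) = 2 := by
  unfold sp
  rw [finrank_ad, finrank_ad, finrank_bot]
  · simpa using h.1
  · rw [mem_ad]
    simp only [Submodule.mem_bot]
    rintro (h' | h')
    · exact h.2.1 h'
    · exact h.2.2.1 ((PV_add_eq_zero _ _).mp h').symm

lemma iso_sp {x : PV n × PV n} (h : symp x.1 x.2 = 0) : IsIsotropic (sp x) := by
  apply iso_ad
  · apply iso_ad
    · intro a ha b _
      rw [(Submodule.mem_bot _).mp ha, symp_zero_left]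
    · intro a ha
      rw [(Submodule.mem_bot _).mp ha]; exact symp_zero_left _
  · intro a ha
    rcases mem_ad.mp ha with h' | h'
    · rw [(Submodule.mem_bot _).mp h']; exact symp_zero_left _
    · rw [(PV_add_eq_zero _ _).mp ((Submodule.mem_bot _).mp h')]
      exact h

lemma mem_perp_sp {x : PV n × PV n} {v : PV n} :
    v ∈ perp (sp x) ↔ symp x.1 v = 0 ∧ symp x.2 v = 0 := by
  constructor
  · intro h; exact ⟨h _ (fst_mem_sp x), h _ (snd_mem_sp x)⟩
  · rintro ⟨h1, h2⟩
    have : sp x ≤ perp (ad ⊥ v) := by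
      rw [sp_le]
      constructor
      · intro a ha
        rcases mem_ad.mp ha with h' | h'
        · rw [(Submodule.mem_bot _).mp h']; exact symp_zero_left _
        · rw [(PV_add_eq_zero _ _).mp ((Submodule.mem_bot _).mp h')]
          rw [sympB_apply, symp_comm]; exact h1
      · intro a ha
        rcases mem_ad.mp ha with h' | h'
        · rw [(Submodule.mem_bot _).mp h']; exact symp_zero_left _
        · rw [(PV_add_eq_zero _ _).mp ((Submodule.mem_bot _).mp h')]
          rw [sympB_apply, symp_comm]; exact h2
    intro a ha
    have := this ha v (self_mem_ad _ _)
    rw [sympB_apply, symp_comm] at *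
    rw [symp_comm]; exact this

/-- The span of two pairs. -/
def sp4 (x y : PV n × PV n) : Submodule F2 (PV n) := ad (ad (sp x) y.1) y.2

lemma sp4_le {x y : PV n × PV n} {S : Submodule F2 (PV n)} :
    sp4 x y ≤ S ↔ (x.1 ∈ S ∧ x.2 ∈ S) ∧ (y.1 ∈ S ∧ y.2 ∈ S) := by
  simp only [sp4, ad_le, sp_le]; tauto

lemma sp4_comm (x y : PV n × PV n) : sp4 x y = sp4 y x := by
  apply le_antisymm
  · exact sp4_le.mpr (sp4_le.mp (le_refl (sp4 y x))).symm
  · exact sp4_le.mpr (sp4_le.mp (le_refl (sp4 x y))).symm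

lemma iso_sp4 {x y : PV n × PV n} (hx : Om x) (hy : Om y) :
    IsIsotropic (sp4 x y) ↔ PO x y := by
  constructor
  · intro h
    obtain ⟨⟨h1, h2⟩, h3, h4⟩ := sp4_le.mp (le_refl (sp4 x y))
    exact ⟨h _ h1 _ h3, h _ h1 _ h4, h _ h2 _ h3, h _ h2 _ h4⟩
  · rintro ⟨h1, h2, h3, h4⟩
    have hp1 : y.1 ∈ perp (sp x) := mem_perp_sp.mpr ⟨h1, h3⟩
    have hp2 : y.2 ∈ perp (sp x) := mem_perp_sp.mpr ⟨h2, h4⟩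
    apply iso_ad (iso_ad (iso_sp hx.2.2.2) hp1)
    intro a ha
    rcases mem_ad.mp ha with h' | h'
    · exact hp2 a h'
    · have := hp2 _ h'
      rw [sympB_apply, symp_add_left, hy.2.2.2, add_zero] at this
      exact this

lemma card_Om {S : Submodule F2 (PV n)} (hS : IsIsotropic S) :
    (univ.filter (fun y => Om y ∧ y.1 ∈ S ∧ y.2 ∈ S)).card =
      (2 ^ Module.finrank F2 S - 1) * (2 ^ Module.finrank F2 S - 1)
        - (2 ^ Module.finrank F2 S - 1) := by
  have h1 : univ.filter (fun y => Om y ∧ y.1 ∈ S ∧ y.2 ∈ S)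
      = ((univ.filter (fun v => v ∈ S)).erase 0).offDiag := by
    ext y
    simp only [mem_filter, mem_univ, true_and, Finset.mem_offDiag, Finset.mem_erase]
    constructor
    · rintro ⟨⟨a, c, e, _⟩, b, d⟩
      exact ⟨⟨a, b⟩, ⟨c, d⟩, e⟩
    · rintro ⟨⟨a, b⟩, ⟨c, d⟩, e⟩
      exact ⟨⟨a, c, e, hS _ b _ d⟩, b, d⟩
  rw [h1, Finset.offDiag_card, Finset.card_erase_of_mem, card_sub]
  simp

/-- The number of ordered bases in an `n`-space. -/
def Kn (n : ℕ) : ℕ := (2 ^ n - 1) * (2 ^ n - 1) - (2 ^ n - 1)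

lemma sp_eq {y : PV n × PV n} (hy : Om y) {S : Submodule F2 (PV n)} (hS : S ∈ Lset n 2) :
    sp y = S ↔ y.1 ∈ S ∧ y.2 ∈ S := by
  rw [← sp_le]
  constructor
  · rintro rfl; exact le_rfl
  · intro h
    exact Submodule.eq_of_le_of_finrank_eq h (by rw [finrank_sp hy, hS.2])

lemma sp_mem {y : PV n × PV n} (hy : Om y) : sp y ∈ Lset n 2 :=
  ⟨iso_sp hy.2.2.2, finrank_sp hy⟩

lemma lift_sum (F : Submodule F2 (PV n) → ℝ) :
    ∑ y ∈ univ.filter (fun y => Om y), F (sp y) =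
      6 * ∑ S ∈ univ.filter (fun S => S ∈ Lset n 2), F S := by
  rw [← Finset.sum_fiberwise_of_maps_to (s := univ.filter (fun y : PV n × PV n => Om y))
    (t := univ.filter (fun S => S ∈ Lset n 2)) (g := sp)]
  · rw [Finset.mul_sum]
    refine Finset.sum_congr rfl fun S hS => ?_
    simp only [mem_filter, mem_univ, true_and] at hS
    have h1 : ∑ y ∈ (univ.filter (fun y : PV n × PV n => Om y)).filter (fun y => sp y = S), F (sp y)
        = ∑ y ∈ univ.filter (fun y => Om y ∧ y.1 ∈ S ∧ y.2 ∈ S), F S := by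
      rw [Finset.filter_filter]
      apply Finset.sum_congr
      · ext y
        simp only [mem_filter, mem_univ, true_and]
        constructor
        · rintro ⟨a, b⟩; exact ⟨a, (sp_eq a hS).mp b⟩
        · rintro ⟨a, b⟩; exact ⟨a, (sp_eq a hS).mpr b⟩
      · intro y hy
        simp only [mem_filter, mem_univ, true_and] at hy
        rw [(sp_eq hy.1 hS).mpr hy.2]
    rw [h1, Finset.sum_const, card_Om hS.1, hS.2]
    norm_num
  · intro y hy
    simp only [mem_filter, mem_univ, true_and] at hy ⊢
    exact sp_mem hy

lemma row_sum {x : PV n × PV n} (hx : Om x) :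
    ∑ y ∈ univ.filter (fun y => Om y), NL (sp4 x y) = Pc (n - 2) * Kn n := by
  have h1 : ∀ y, NL (sp4 x y) = ∑ L ∈ univ.filter (fun L => L ∈ Lset n n ∧ sp x ≤ L),
      if y.1 ∈ L ∧ y.2 ∈ L then 1 else 0 := by
    intro y
    rw [NL, Finset.card_eq_sum_ones, Finset.sum_filter, Finset.sum_filter]
    refine Finset.sum_congr rfl fun L _ => ?_
    rw [sp4_le, ← sp_le]
    by_cases h2 : L ∈ Lset n n <;> by_cases h3 : sp x ≤ L <;> simp [h2, h3]
  simp only [h1]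
  rw [Finset.sum_comm]
  have h2 : NL (sp x) = Pc (n - 2) := by
    rw [NL_iso (iso_sp hx.2.2.2), finrank_sp hx]
  rw [← h2, NL, ← smul_eq_mul, ← Finset.sum_const]
  refine Finset.sum_congr rfl fun L hL => ?_
  simp only [mem_filter, mem_univ, true_and] at hL
  rw [← Finset.sum_filter, Finset.filter_filter, ← Finset.card_eq_sum_ones, card_Om hL.1.1, hL.1.2]
  rfl

/-- The error kernel. -/
noncomputable def EE (x y : PV n × PV n) : ℝ :=
  if Om x ∧ Om y then (NL (sp4 x y) : ℝ) - Pc (n - 4) * (if PO x y then 1 else 0) else 0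

lemma PO_comm (x y : PV n × PV n) : PO x y ↔ PO y x := by
  simp only [PO, symp_comm x.1, symp_comm x.2]; tauto

lemma EE_comm (x y : PV n × PV n) : EE x y = EE y x := by
  simp only [EE, sp4_comm x y, PO_comm x y, and_comm]

lemma EE_nonneg (x y : PV n × PV n) : 0 ≤ EE x y := by
  unfold EE
  split_ifs with h h'
  · have hi := (iso_sp4 h.1 h.2).mpr h'
    have hf : Module.finrank F2 (sp4 x y) ≤ 4 := by
      have h1 := finrank_ad_le (ad (sp x) y.1) y.2
      have h2 := finrank_ad_le (sp x) y.1
      rw [finrank_sp h.1] at h2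
      unfold sp4; omega
    have : Pc (n - 4) ≤ NL (sp4 x y) := by
      rw [NL_iso hi]; exact Pc_mono (by omega)
    have : (Pc (n - 4) : ℝ) ≤ NL (sp4 x y) := by exact_mod_cast this
    linarith
  · simp
  · exact le_rfl

/-- Indicator of a subspace. -/
noncomputable def ind (S : Submodule F2 (PV n)) (v : PV n) : ℝ := if v ∈ S then 1 else 0

lemma ind_nonneg (S : Submodule F2 (PV n)) (v : PV n) : 0 ≤ ind S v := by
  unfold ind; split_ifs <;> norm_num

lemma ind_sum (S : Submodule F2 (PV n)) : ∑ v, ind S v = 2 ^ Module.finrank F2 S := by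
  unfold ind
  rw [← Finset.sum_filter, Finset.sum_const, card_sub]; simp

lemma EE_le (x y : PV n × PV n) : EE x y ≤
    Pc (n - 3) * (ind (sp x) y.1 * ind (perp (sp x)) y.2 + ind (perp (sp x)) y.1 * ind (sp x) y.2
      + ind (perp (sp x)) y.1 * ind (sp x) (y.1 + y.2))
    + Pc (n - 2) * (ind (sp x) y.1 * ind (sp x) y.2) := by
  have i0 := ind_nonneg (sp x)
  have j0 := ind_nonneg (perp (sp x))
  have t1 := mul_nonneg (i0 y.1) (j0 y.2)
  have t2 := mul_nonneg (j0 y.1) (i0 y.2)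
  have t3 := mul_nonneg (j0 y.1) (i0 (y.1 + y.2))
  have t4 := mul_nonneg (i0 y.1) (i0 y.2)
  have P3 : (0:ℝ) ≤ Pc (n - 3) := Nat.cast_nonneg _
  have P2 : (0:ℝ) ≤ Pc (n - 2) := Nat.cast_nonneg _
  have P4 : (0:ℝ) ≤ Pc (n - 4) := Nat.cast_nonneg _
  have hpos : 0 ≤ Pc (n - 3) * (ind (sp x) y.1 * ind (perp (sp x)) y.2
      + ind (perp (sp x)) y.1 * ind (sp x) y.2
      + ind (perp (sp x)) y.1 * ind (sp x) (y.1 + y.2))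
      + Pc (n - 2) * (ind (sp x) y.1 * ind (sp x) y.2) := by positivity
  unfold EE
  split_ifs with h h'
  · have hi := (iso_sp4 h.1 h.2).mpr h'
    have hp1 : y.1 ∈ perp (sp x) := mem_perp_sp.mpr ⟨h'.1, h'.2.2.1⟩
    have hp2 : y.2 ∈ perp (sp x) := mem_perp_sp.mpr ⟨h'.2.1, h'.2.2.2⟩
    have hj1 : ind (perp (sp x)) y.1 = 1 := if_pos hp1
    have hj2 : ind (perp (sp x)) y.2 = 1 := if_pos hp2
    have hsp := iso_sp h.1.2.2.2
    have hN2 : NL (sp x) = Pc (n - 2) := by rw [NL_iso hsp, finrank_sp h.1]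
    have hN3 : ∀ v, v ∈ perp (sp x) → v ∉ sp x → NL (ad (sp x) v) = Pc (n - 3) := by
      intro v hv hv'
      rw [NL_iso (iso_ad hsp hv), finrank_ad hv', finrank_sp h.1]
    rw [hj1, hj2] at hpos ⊢
    by_cases m1 : y.1 ∈ sp x
    · have hi1 : ind (sp x) y.1 = 1 := if_pos m1
      by_cases m2 : y.2 ∈ sp x
      · have hi2 : ind (sp x) y.2 = 1 := if_pos m2
        have : sp4 x y = sp x := by rw [sp4, ad_of_mem m1, ad_of_mem m2]
        rw [this, hN2, hi1, hi2]
        have := i0 (y.1 + y.2)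
        nlinarith [mul_nonneg P3 this]
      · have : sp4 x y = ad (sp x) y.2 := by rw [sp4, ad_of_mem m1]
        rw [this, hN3 _ hp2 m2, hi1]
        nlinarith [mul_nonneg P3 (i0 (y.1 + y.2)), mul_nonneg P3 (i0 y.2), mul_nonneg P2 (i0 y.2)]
    · by_cases m2 : y.2 ∈ ad (sp x) y.1
      · have h3 : sp4 x y = ad (sp x) y.1 := by rw [sp4, ad_of_mem m2]
        rw [h3, hN3 _ hp1 m1]
        have h4 : 1 ≤ ind (sp x) y.2 + ind (sp x) (y.1 + y.2) := by
          rcases mem_ad.mp m2 with m | m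
          · have : ind (sp x) y.2 = 1 := if_pos m
            linarith [i0 (y.1 + y.2)]
          · rw [add_comm] at m
            have : ind (sp x) (y.1 + y.2) = 1 := if_pos m
            linarith [i0 y.2]
        have h5 := mul_le_mul_of_nonneg_left h4 P3
        have h6 := mul_nonneg P3 (i0 y.1)
        have h7 := mul_nonneg P2 t4
        nlinarith
      · have h3 : NL (sp4 x y) = Pc (n - 4) := by
          rw [NL_iso hi, sp4, finrank_ad m2, finrank_ad m1, finrank_sp h.1]
        rw [h3]
        linarith
  · have hi := fun hh => h' ((iso_sp4 h.1 h.2).mp hh)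
    rw [NL_not_iso hi]
    simpa using hpos
  · exact hpos

lemma sum_mul_pair (f g : PV n → ℝ) : ∑ y : PV n × PV n, f y.1 * g y.2 = (∑ v, f v) * ∑ v, g v := by
  have : ∑ y : PV n × PV n, f y.1 * g y.2 = ∑ a, ∑ b, f a * g b := Fintype.sum_prod_type _
  rw [this, Finset.sum_mul_sum]

lemma EE_row (x : PV n × PV n) : ∑ y, EE x y ≤
    Pc (n - 3) * (12 * 2 ^ (2 * n - 2)) + Pc (n - 2) * 16 := by
  by_cases hx : Om x
  · refine (Finset.sum_le_sum fun y _ => EE_le x y).trans ?_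
    rw [Finset.sum_add_distrib, ← Finset.mul_sum, ← Finset.mul_sum, Finset.sum_add_distrib,
      Finset.sum_add_distrib]
    have h3 : ∑ y : PV n × PV n, ind (perp (sp x)) y.1 * ind (sp x) (y.1 + y.2) =
        ∑ y : PV n × PV n, ind (perp (sp x)) y.1 * ind (sp x) y.2 := by
      rw [← Equiv.sum_comp (sh_sh (n := n)).toPerm
        (fun y : PV n × PV n => ind (perp (sp x)) y.1 * ind (sp x) y.2)]
      rfl
    rw [h3, sum_mul_pair, sum_mul_pair, sum_mul_pair, ind_sum, ind_sum, finrank_perp, finrank_sp hx]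
    apply le_of_eq
    ring
  · have : ∀ y, EE x y = 0 := fun y => if_neg (fun h => hx h.1)
    simp only [this, Finset.sum_const_zero]
    positivity
end kernel
section main
variable {n : ℕ}

/-- Extension by zero of a function on the vertices. -/
noncomputable def VV (v : BVtx n → ℝ) (S : Submodule F2 (PV n)) : ℝ :=
  if h : S ∈ Lset n n ∪ Lset n 2 then v ⟨S, h⟩ else 0

lemma VV_eq (v : BVtx n → ℝ) (x : BVtx n) : VV v x.1 = v x := by
  unfold VV; rw [dif_pos x.2]

lemma mulVec_eq (v : BVtx n → ℝ) (x : BVtx n) (q : Submodule F2 (PV n) → Prop)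
    [DecidablePred q]
    (hq : ∀ S, q S → S ∈ Lset n n ∪ Lset n 2) (hx : ∀ y : BVtx n, BAdj x y ↔ q y.1) :
    (adjB n).mulVec v x = ∑ S ∈ univ.filter q, VV v S := by
  have h1 : (adjB n).mulVec v x = ∑ y : BVtx n, if q y.1 then VV v y.1 else 0 := by
    simp only [Matrix.mulVec, dotProduct, adjB, adjMat]
    refine Finset.sum_congr rfl fun y _ => ?_
    rw [VV_eq]
    by_cases h : q y.1
    · rw [if_pos h, if_pos ((hx y).mpr h), one_mul]
    · rw [if_neg h, if_neg (fun h' => h ((hx y).mp h')), zero_mul]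
  rw [h1]
  have h2 : ∑ S ∈ univ.filter (fun S => S ∈ Lset n n ∪ Lset n 2), (if q S then VV v S else 0) =
      ∑ y : BVtx n, (if q y.1 then VV v y.1 else 0) :=
    Finset.sum_subtype _ (by simp) (fun S => if q S then VV v S else 0)
  rw [← h2, ← Finset.sum_filter, Finset.filter_filter]
  apply Finset.sum_congr _ (fun _ _ => rfl)
  ext S
  simp only [mem_filter, mem_univ, true_and]
  exact ⟨fun h => h.2, fun h => ⟨hq S h, h⟩⟩

lemma L_ne (hn : 4 ≤ n) {S : Submodule F2 (PV n)} (h : S ∈ Lset n n) (h' : S ∈ Lset n 2) :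
    False := by
  have := h.2.symm.trans h'.2
  omega

lemma L_lt (hn : 4 ≤ n) {S T : Submodule F2 (PV n)} (h : S ∈ Lset n 2) (h' : T ∈ Lset n n) :
    S < T ↔ S ≤ T := by
  refine ⟨le_of_lt, fun hle => lt_of_le_of_ne hle ?_⟩
  rintro rfl
  exact L_ne hn h' h

lemma eqA (hn : 4 ≤ n) {v : BVtx n → ℝ} {μ : ℝ} (hv : (adjB n).mulVec v = μ • v)
    {t : Submodule F2 (PV n)} (ht : t ∈ Lset n 2) :
    ∑ L ∈ univ.filter (fun L => L ∈ Lset n n ∧ t ≤ L), VV v L = μ * VV v t := by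
  have h1 := mulVec_eq v ⟨t, Or.inr ht⟩ (fun L => L ∈ Lset n n ∧ t ≤ L)
    (fun S hS => Or.inl hS.1) (by
      intro y
      constructor
      · rintro (⟨_, h2, h3⟩ | ⟨_, h2, _⟩)
        · exact ⟨h2, h3.le⟩
        · exact (L_ne hn h2 ht).elim
      · rintro ⟨h2, h3⟩
        exact Or.inl ⟨ht, h2, (L_lt hn ht h2).mpr h3⟩)
  rw [← h1, hv]
  show μ * v _ = _
  rw [← VV_eq v ⟨t, Or.inr ht⟩]

lemma eqB (hn : 4 ≤ n) {v : BVtx n → ℝ} {μ : ℝ} (hv : (adjB n).mulVec v = μ • v)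
    {L : Submodule F2 (PV n)} (hL : L ∈ Lset n n) :
    ∑ t ∈ univ.filter (fun t => t ∈ Lset n 2 ∧ t ≤ L), VV v t = μ * VV v L := by
  have h1 := mulVec_eq v ⟨L, Or.inl hL⟩ (fun t => t ∈ Lset n 2 ∧ t ≤ L)
    (fun S hS => Or.inr hS.1) (by
      intro y
      constructor
      · rintro (⟨h2, _, _⟩ | ⟨h1, _, h3⟩)
        · exact (L_ne hn hL h2).elim
        · exact ⟨h1, h3.le⟩
      · rintro ⟨h2, h3⟩
        exact Or.inr ⟨h2, hL, (L_lt hn h2 hL).mpr h3⟩)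
  rw [← h1, hv]
  show μ * v _ = _
  rw [← VV_eq v ⟨L, Or.inl hL⟩]

/-- Lifted eigenfunction. -/
noncomputable def GG (v : BVtx n → ℝ) (x : PV n × PV n) : ℝ := if Om x then VV v (sp x) else 0

lemma GG_sw (v : BVtx n → ℝ) (x : PV n × PV n) : GG v (sw x) = GG v x := by
  simp only [GG, Om_sw, sp_sw]

lemma GG_sh (v : BVtx n → ℝ) (x : PV n × PV n) : GG v (sh x) = GG v x := by
  simp only [GG, Om_sh, sp_sh]

/-- Full kernel. -/
noncomputable def KN (x y : PV n × PV n) : ℝ := if Om x ∧ Om y then (NL (sp4 x y) : ℝ) else 0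

lemma eqC (hn : 4 ≤ n) {v : BVtx n → ℝ} {μ : ℝ} (hv : (adjB n).mulVec v = μ • v)
    (x : PV n × PV n) : 6 * μ ^ 2 * GG v x = ∑ y, GG v y * KN x y := by
  by_cases hx : Om x
  · have ht := sp_mem hx
    have h1 : μ ^ 2 * VV v (sp x) = ∑ L ∈ univ.filter (fun L => L ∈ Lset n n ∧ sp x ≤ L),
        ∑ t ∈ univ.filter (fun t => t ∈ Lset n 2), if t ≤ L then VV v t else 0 := by
      rw [sq, mul_assoc, ← eqA hn hv ht, Finset.mul_sum]
      refine Finset.sum_congr rfl fun L hL => ?_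
      simp only [mem_filter, mem_univ, true_and] at hL
      rw [← eqB hn hv hL.1, ← Finset.sum_filter, Finset.filter_filter]
    rw [GG, if_pos hx, mul_assoc, h1, Finset.sum_comm, ← lift_sum, Finset.sum_filter]
    refine Finset.sum_congr rfl fun y _ => ?_
    by_cases hy : Om y
    · simp only [GG, KN, hx, hy, and_self, if_true]
      rw [← Finset.sum_filter, Finset.filter_filter, Finset.sum_const, nsmul_eq_mul, mul_comm, NL]
      congr 3
      ext L
      simp only [mem_filter, mem_univ, true_and]
      rw [sp4_le, ← sp_le, ← sp_le, and_assoc]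
    · simp [GG, hy]
  · have h2 : ∀ y, KN x y = 0 := fun y => if_neg (fun h => hx h.1)
    simp [GG, hx, h2]

lemma KN_comm (x y : PV n × PV n) : KN x y = KN y x := by
  simp only [KN, sp4_comm x y, and_comm]

lemma KN_row {x : PV n × PV n} (hx : Om x) : ∑ y, KN x y = (Pc (n - 2) * Kn n : ℕ) := by
  rw [← row_sum hx, Nat.cast_sum, Finset.sum_filter]
  refine Finset.sum_congr rfl fun y _ => ?_
  simp [KN, hx]

lemma GG_pos (hn : 4 ≤ n) {v : BVtx n → ℝ} {μ : ℝ} (hv : (adjB n).mulVec v = μ • v)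
    (hv0 : v ≠ 0) (hμ : μ ≠ 0) : 0 < ∑ x, GG v x ^ 2 := by
  have hnn : 0 ≤ ∑ x, GG v x ^ 2 := Finset.sum_nonneg fun x _ => sq_nonneg _
  refine lt_of_le_of_ne hnn fun h0 => hv0 ?_
  have h1 : ∑ x, GG v x ^ 2 = 6 * ∑ S ∈ univ.filter (fun S => S ∈ Lset n 2), VV v S ^ 2 := by
    rw [← lift_sum (fun S => VV v S ^ 2), Finset.sum_filter]
    refine Finset.sum_congr rfl fun x _ => ?_
    unfold GG
    split_ifs <;> simp
  have h2 : ∑ S ∈ univ.filter (fun S => S ∈ Lset n 2), VV v S ^ 2 = 0 := by linarith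
  rw [Finset.sum_eq_zero_iff_of_nonneg (fun _ _ => sq_nonneg _)] at h2
  have h3 : ∀ S ∈ Lset n 2, VV v S = 0 := by
    intro S hS
    have := h2 S (by simpa using hS)
    simpa using this
  funext y
  rw [← VV_eq v y]
  rcases y.2 with h | h
  · have h4 := eqB hn hv h
    rw [Finset.sum_eq_zero] at h4
    · rcases mul_eq_zero.mp h4.symm with h5 | h5
      · exact absurd h5 hμ
      · exact h5
    · intro t ht
      simp only [mem_filter, mem_univ, true_and] at ht
      exact h3 t ht.1
  · exact h3 _ h

lemma quad (hn : 4 ≤ n) {v : BVtx n → ℝ} {μ : ℝ} (hv : (adjB n).mulVec v = μ • v) :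
    6 * μ ^ 2 * ∑ x, GG v x ^ 2 = ∑ x, ∑ y, GG v x * GG v y * KN x y := by
  rw [Finset.mul_sum]
  refine Finset.sum_congr rfl fun x _ => ?_
  have := eqC hn hv x
  rw [sq (GG v x), ← mul_assoc, this, Finset.sum_mul]
  exact Finset.sum_congr rfl fun y _ => by ring

lemma upper (hn : 4 ≤ n) {v : BVtx n → ℝ} {μ : ℝ} (hv : (adjB n).mulVec v = μ • v)
    (hv0 : v ≠ 0) : 6 * μ ^ 2 ≤ (Pc (n - 2) * Kn n : ℕ) := by
  by_cases hμ : μ = 0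
  · rw [hμ]; simp; positivity
  have hp := GG_pos hn hv hv0 hμ
  have h := schur_bound (KN (n := n)) ((Pc (n - 2) * Kn n : ℕ) : ℝ)
    (fun x y => by unfold KN; split_ifs <;> simp) KN_comm
    (fun x => by
      by_cases hx : Om x
      · exact (KN_row hx).le
      · have h2 : ∀ y, KN x y = 0 := fun y => if_neg (fun h => hx h.1)
        simp only [h2, Finset.sum_const_zero]
        exact Nat.cast_nonneg _) (GG v)
  rw [← quad hn hv] at h
  exact le_of_mul_le_mul_right h hp

lemma dicho (hn : 4 ≤ n) {v : BVtx n → ℝ} {μ : ℝ} (hv : (adjB n).mulVec v = μ • v) :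
    ∑ x, GG v x = 0 ∨ 6 * μ ^ 2 = (Pc (n - 2) * Kn n : ℕ) := by
  have h1 : 6 * μ ^ 2 * ∑ x, GG v x = (Pc (n - 2) * Kn n : ℕ) * ∑ x, GG v x := by
    rw [Finset.mul_sum]
    simp only [eqC hn hv]
    rw [Finset.sum_comm, Finset.mul_sum]
    refine Finset.sum_congr rfl fun y _ => ?_
    rw [← Finset.mul_sum, mul_comm]
    by_cases hy : Om y
    · congr 1
      rw [← KN_row hy]
      exact Finset.sum_congr rfl fun x _ => KN_comm _ _
    · simp [GG, hy]
  rcases eq_or_ne (∑ x, GG v x) 0 with h | h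
  · exact Or.inl h
  · exact Or.inr (mul_right_cancel₀ h h1)

lemma second (hn : 4 ≤ n) {v : BVtx n → ℝ} {μ : ℝ} (hv : (adjB n).mulVec v = μ • v)
    (hv0 : v ≠ 0) (hμ : μ ≠ 0) (h0 : ∑ x, GG v x = 0) :
    6 * μ ^ 2 ≤ Pc (n - 4) * ((9 * ((2:ℝ) ^ n) ^ 3 + 6 * ((2:ℝ) ^ n) ^ 2) / 16) +
      (Pc (n - 3) * (12 * 2 ^ (2 * n - 2)) + Pc (n - 2) * 16) := by
  have hp := GG_pos hn hv hv0 hμ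
  have hA := PO_bound (GG v) (GG_sw v) (GG_sh v) h0
  have hB := schur_bound (EE (n := n)) _ EE_nonneg EE_comm EE_row (GG v)
  have hq := quad hn hv
  have hsplit : ∑ x, ∑ y, GG v x * GG v y * KN x y =
      Pc (n - 4) * (∑ x, ∑ y, GG v x * GG v y * (if PO x y then (1:ℝ) else 0)) +
      ∑ x, ∑ y, GG v x * GG v y * EE x y := by
    rw [Finset.mul_sum, ← Finset.sum_add_distrib]
    refine Finset.sum_congr rfl fun x _ => ?_
    rw [Finset.mul_sum, ← Finset.sum_add_distrib]
    refine Finset.sum_congr rfl fun y _ => ?_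
    by_cases hx : Om x
    · by_cases hy : Om y
      · simp only [KN, EE, hx, hy, and_self, if_true]; ring
      · simp [GG, hy]
    · simp [GG, hx]
  rw [hsplit] at hq
  have hP : (0:ℝ) ≤ Pc (n - 4) := Nat.cast_nonneg _
  have hA' := mul_le_mul_of_nonneg_left hA hP
  apply le_of_mul_le_mul_right _ hp
  rw [hq]
  linarith

lemma Pc_bound (m : ℕ) : (Pc m : ℝ) ≤ 3 * 2 ^ ((m + 1) * m / 2) := by
  have hT : ∀ m : ℕ, (m + 1 + 1) * (m + 1) / 2 = (m + 1) * m / 2 + (m + 1) := by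
    intro m
    have : (m + 1 + 1) * (m + 1) = (m + 1) * m + 2 * (m + 1) := by ring
    rw [this]; omega
  have key : ∀ m : ℕ, (Pc (m + 1) : ℝ) ≤
      3 * 2 ^ ((m + 1 + 1) * (m + 1) / 2) * (1 - 1 / 2 ^ (m + 1)) := by
    intro m
    induction m with
    | zero => norm_num [Pc]
    | succ m ih =>
      rw [Pc_succ, hT (m + 1), pow_add (2:ℝ) ((m + 1 + 1) * (m + 1) / 2) (m + 1 + 1)]
      push_cast
      have hy : (0:ℝ) < 2 ^ (m + 1) := by positivity
      have hz : (0:ℝ) < 2 ^ ((m + 1 + 1) * (m + 1) / 2) := by positivity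
      rw [pow_succ (2:ℝ) (m + 1)]
      generalize (2:ℝ) ^ (m + 1) = y at *
      generalize (2:ℝ) ^ ((m + 1 + 1) * (m + 1) / 2) = z at *
      calc (Pc (m + 1) : ℝ) * (y * 2 + 1) ≤ (3 * z * (1 - 1 / y)) * (y * 2 + 1) := by gcongr
        _ = 3 * (z * (y * 2)) * (1 - 1 / (y * 2)) - 3 * z * (1 / y) := by field_simp; ring
        _ ≤ _ := by
          have : 0 ≤ 3 * z * (1 / y) := by positivity
          linarith
  cases m with
  | zero => norm_num [Pc]
  | succ m =>
    refine (key m).trans ?_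
    have h1 : (0:ℝ) ≤ 1 / 2 ^ (m + 1) := by positivity
    have h2 : (0:ℝ) < 3 * 2 ^ ((m + 1 + 1) * (m + 1) / 2) := by positivity
    nlinarith

lemma final_arith (hn : 4 ≤ n) :
    Pc (n - 4) * ((9 * ((2:ℝ) ^ n) ^ 3 + 6 * ((2:ℝ) ^ n) ^ 2) / 16) +
      (Pc (n - 3) * (12 * 2 ^ (2 * n - 2)) + Pc (n - 2) * 16)
      ≤ 6 * (75 * (2 : ℝ) ^ (Qexp n (n - 3))) := by
  obtain ⟨m, rfl⟩ : ∃ m, n = m + 4 := ⟨n - 4, by omega⟩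
  have hT : ∀ m : ℕ, (m + 1 + 1) * (m + 1) / 2 = (m + 1) * m / 2 + (m + 1) := by
    intro m
    have : (m + 1 + 1) * (m + 1) = (m + 1) * m + 2 * (m + 1) := by ring
    rw [this]; omega
  have a1 : m + 4 - 4 = m := by omega
  have a2 : m + 4 - 3 = m + 1 := by omega
  have a3 : m + 4 - 2 = m + 2 := by omega
  have a4 : 2 * (m + 4) - 2 = m + m + 6 := by omega
  have a5 : Qexp (m + 4) (m + 1) = (m + 1) * m / 2 + (m + m + m) + 5 := by
    unfold Qexp
    have b1 : m + 4 - (m + 1) = 3 := by omega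
    rw [b1, Nat.add_sub_cancel]
    omega
  rw [a1, a2, a3, a4, a5]
  have p4 := Pc_bound m
  have p3 := Pc_bound (m + 1)
  have p2 := Pc_bound (m + 2)
  rw [hT (m + 1), hT m] at p2
  rw [hT m] at p3
  simp only [pow_add] at *
  have hy : (1:ℝ) ≤ 2 ^ m := one_le_pow₀ (by norm_num)
  have hz : (0:ℝ) < 2 ^ ((m + 1) * m / 2) := by positivity
  generalize (2:ℝ) ^ m = y at *
  generalize (2:ℝ) ^ ((m + 1) * m / 2) = z at *
  have hy0 : (0:ℝ) < y := by linarith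
  calc _ ≤ (3 * z) * ((9 * (y * 2 ^ 4) ^ 3 + 6 * (y * 2 ^ 4) ^ 2) / 16) +
      ((3 * (z * (y * 2 ^ 1))) * (12 * (y * y * 2 ^ 6))
        + (3 * (z * (y * 2 ^ 1) * (y * 2 ^ 1 * 2 ^ 1))) * 16) := by gcongr
    _ ≤ _ := by
      have : z * (y * y) * 1 ≤ z * (y * y) * y := by gcongr
      nlinarith [mul_pos hz (mul_pos hy0 (mul_pos hy0 hy0))]
end main

/-- For `n ≥ 4`, the spectral parameter `λ` of `B_{n,2}` satisfies `λ² ≤ 75·2^{Q(n−3)}`. -/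
theorem specParam_B_sq_le :
    ∀ n : ℕ, 4 ≤ n →
      (specParam (adjB n)) ^ 2 ≤ 75 * (2 : ℝ) ^ (Qexp n (n - 3)) := by
  intro n hn
  set B : ℝ := 75 * (2 : ℝ) ^ (Qexp n (n - 3)) with hB
  have hB0 : 0 ≤ B := by positivity
  have hnn : 0 ≤ specParam (adjB n) := by
    apply Real.sSup_nonneg
    rintro _ ⟨⟨μ, _, rfl⟩, _⟩
    exact abs_nonneg μ
  have hle : specParam (adjB n) ≤ √B := by
    apply Real.sSup_le _ (Real.sqrt_nonneg _)
    rintro _ ⟨⟨μ, ⟨v, hv0, hv⟩, rfl⟩, hne⟩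
    apply Real.abs_le_sqrt
    by_cases hμ : μ = 0
    · rw [hμ]; simpa using hB0
    rcases dicho hn hv with h0 | h1
    · have := second hn hv hv0 hμ h0
      have h2 := final_arith hn
      linarith
    · exfalso
      apply hne
      rw [Set.mem_singleton_iff]
      symm
      apply IsGreatest.csSup_eq
      refine ⟨⟨μ, ⟨v, hv0, hv⟩, rfl⟩, ?_⟩
      rintro _ ⟨ν, ⟨w, hw0, hw⟩, rfl⟩
      have h3 := upper hn hw hw0
      rw [← h1] at h3
      exact sq_le_sq.mp (by linarith)
  calc (specParam (adjB n)) ^ 2 ≤ (√B) ^ 2 := by gcongr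
    _ = B := Real.sq_sqrt hB0
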